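/- Let (ρ, X) be a strict positive A–B-correspondence and (φ, Y) a nondegenerate B–C-correspondence. Then the map ρ ⊗ Id : A → End_C(X ⊗_B Y) given by (ρ⊗Id)(a)(x ⊗ y) = ρ(a)x ⊗ y is a well-defined strict completely positive map, and there is an isomorphism of A–C-correspondences (A ⊗_ρ X) ⊗_B Y ≅ A ⊗_{ρ⊗Id} (X ⊗_B Y) intertwining the left A-actions. -/

import Mathlib

noncomputable section

open Filter Topology

universe u

/-- A bundled right Hilbert C*-module structure over a (possibly non-unital)
C*-algebra `B` on a complete normed complex vector space `X`.  The fields record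
the right `B`-action, the `B`-valued inner product, and their standard axioms,
including positivity of inner products and compatibility of the norm. -/
structure HilbertModule (B : Type u) (X : Type u)
    [NonUnitalCStarAlgebra B] [NormedAddCommGroup X] [NormedSpace ℂ X] [CompleteSpace X] :
    Type u where
  smulR : X → B → X
  inner : X → X → B
  smulR_add : ∀ (x : X) (b c : B), smulR x (b + c) = smulR x b + smulR x c
  add_smulR : ∀ (x y : X) (b : B), smulR (x + y) b = smulR x b + smulR y b
  smulR_mul : ∀ (x : X) (b c : B), smulR x (b * c) = smulR (smulR x b) c
  smulC_smulR : ∀ (c : ℂ) (x : X) (b : B), smulR (c • x) b = c • smulR x b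
  inner_add_left : ∀ x y z : X, inner (x + y) z = inner x z + inner y z
  inner_add_right : ∀ x y z : X, inner x (y + z) = inner x y + inner x z
  inner_smulR_right : ∀ (x y : X) (b : B), inner x (smulR y b) = inner x y * b
  inner_smulC_right : ∀ (c : ℂ) (x y : X), inner x (c • y) = c • inner x y
  star_inner : ∀ x y : X, star (inner x y) = inner y x
  inner_self_pos : ∀ x : X, ∃ b : B, inner x x = star b * b
  norm_inner_self : ∀ x : X, ‖x‖ ^ 2 = ‖inner x x‖

/-- `T : X → Y` and `S : Y → X` are mutually adjoint operators between
right Hilbert `B`-modules. -/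
def HilbertModule.IsAdjointPair {B X Y : Type u} [NonUnitalCStarAlgebra B]
    [NormedAddCommGroup X] [NormedSpace ℂ X] [CompleteSpace X]
    [NormedAddCommGroup Y] [NormedSpace ℂ Y] [CompleteSpace Y]
    (hX : HilbertModule B X) (hY : HilbertModule B Y)
    (T : X → Y) (S : Y → X) : Prop :=
  ∀ (x : X) (y : Y), hY.inner (T x) y = hX.inner x (S y)

/-- Positivity in a C*-algebra, expressed as being of the form `star c * c`. -/
def IsPositiveElem {B : Type u} [NonUnitalCStarAlgebra B] (b : B) : Prop :=
  ∃ c : B, b = star c * c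

/-- Positivity of a matrix over a C*-algebra. -/
def MatrixIsPositive {A : Type u} [NonUnitalCStarAlgebra A] {n : ℕ}
    (M : Matrix (Fin n) (Fin n) A) : Prop :=
  ∃ N : Matrix (Fin n) (Fin n) A, M = N.conjTranspose * N

/-- A sequential (the algebras in question are separable) approximate unit. -/
structure IsApproxUnit {A : Type u} [NonUnitalCStarAlgebra A] (e : ℕ → A) : Prop where
  pos : ∀ n, IsPositiveElem (e n)
  norm_le_one : ∀ n, ‖e n‖ ≤ 1
  tendsto_mul_left : ∀ a : A, Tendsto (fun n => e n * a) atTop (𝓝 a)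
  tendsto_mul_right : ∀ a : A, Tendsto (fun n => a * e n) atTop (𝓝 a)

/-- A completely positive map between C*-algebras: a linear map sending positive
matrices to positive matrices at every matrix level. -/
structure IsCPMap {A B : Type u} [NonUnitalCStarAlgebra A] [NonUnitalCStarAlgebra B]
    (ρ : A → B) : Prop where
  map_add : ∀ a a', ρ (a + a') = ρ a + ρ a'
  map_smul : ∀ (c : ℂ) (a : A), ρ (c • a) = c • ρ a
  map_pos_matrix : ∀ (n : ℕ) (M : Matrix (Fin n) (Fin n) A),
    MatrixIsPositive M → MatrixIsPositive (M.map ρ)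

/-- A map between C*-algebras is strict if some approximate unit of the domain is
sent to a strictly Cauchy net in the multiplier algebra of the codomain. -/
def IsStrictMap {A B : Type u} [NonUnitalCStarAlgebra A] [NonUnitalCStarAlgebra B]
    (ρ : A → B) : Prop :=
  ∃ e : ℕ → A, IsApproxUnit e ∧
    ∀ b : B, CauchySeq (fun n => ρ (e n) * b) ∧ CauchySeq (fun n => b * ρ (e n))

/-- A completely positive map from `A` into the adjointable operators on a
right Hilbert `B`-module `X`. -/
structure IsCPAction {A B X : Type u} [NonUnitalCStarAlgebra A] [NonUnitalCStarAlgebra B]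
    [NormedAddCommGroup X] [NormedSpace ℂ X] [CompleteSpace X]
    (hX : HilbertModule B X) (ρ : A → X → X) : Prop where
  map_add : ∀ a a' x, ρ (a + a') x = ρ a x + ρ a' x
  map_smul : ∀ (c : ℂ) (a : A) x, ρ (c • a) x = c • ρ a x
  add_right : ∀ a x y, ρ a (x + y) = ρ a x + ρ a y
  adjointable : ∀ a, ∃ S, HilbertModule.IsAdjointPair hX hX (ρ a) S
  pos : ∀ (n : ℕ) (M : Matrix (Fin n) (Fin n) A), MatrixIsPositive M →
    ∀ x : Fin n → X, IsPositiveElem (∑ i, ∑ j, hX.inner (x i) (ρ (M i j) (x j)))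

/-- Strictness for a completely positive map into the adjointable operators on a
Hilbert module: some approximate unit is mapped to a strictly Cauchy net. -/
def IsStrictAction {A B X : Type u} [NonUnitalCStarAlgebra A] [NonUnitalCStarAlgebra B]
    [NormedAddCommGroup X] [NormedSpace ℂ X] [CompleteSpace X]
    (hX : HilbertModule B X) (ρ : A → X → X) : Prop :=
  ∃ e : ℕ → A, IsApproxUnit e ∧ ∃ S : ℕ → X → X,
    (∀ n, HilbertModule.IsAdjointPair hX hX (ρ (e n)) (S n)) ∧
    ∀ x, CauchySeq (fun n => ρ (e n) x) ∧ CauchySeq (fun n => S n x)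

/-- A left action of `A` on a Hilbert `B`-module by adjointable operators via a
*-homomorphism, i.e. the structure of an `A`–`B`-correspondence. -/
structure IsCorrespondenceAction {A B X : Type u} [NonUnitalCStarAlgebra A]
    [NonUnitalCStarAlgebra B]
    [NormedAddCommGroup X] [NormedSpace ℂ X] [CompleteSpace X]
    (hX : HilbertModule B X) (φ : A → X → X) : Prop where
  map_add : ∀ a a' x, φ (a + a') x = φ a x + φ a' x
  map_mul : ∀ a a' x, φ (a * a') x = φ a (φ a' x)
  map_smul : ∀ (c : ℂ) (a : A) x, φ (c • a) x = c • φ a x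
  add_right : ∀ a x y, φ a (x + y) = φ a x + φ a y
  star_adjoint : ∀ a, HilbertModule.IsAdjointPair hX hX (φ a) (φ (star a))

/-- The trivial right Hilbert `B`-module structure on `B` itself. -/
def trivHM (B : Type u) [NonUnitalCStarAlgebra B] : HilbertModule B B where
  smulR b c := b * c
  inner b c := star b * c
  smulR_add := by intros; simp [mul_add]
  add_smulR := by intros; simp [add_mul]
  smulR_mul := by intros; simp [mul_assoc]
  smulC_smulR := by intros; simp [smul_mul_assoc]
  inner_add_left := by intros; simp [star_add, add_mul]
  inner_add_right := by intros; simp [mul_add]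
  inner_smulR_right := by intros; simp [mul_assoc]
  inner_smulC_right := by intros; simp [mul_smul_comm]
  star_inner := by intros; simp [star_mul, mul_assoc]
  inner_self_pos := fun b => ⟨b, rfl⟩
  norm_inner_self := by intro b; rw [CStarRing.norm_star_mul_self, pow_two]

/-- The KSGNS construction applied to a (strict, completely positive) map
`ρ : A → End_B(X)`: the Hilbert `B`-module `E = A ⊗_ρ X`, presented via the
canonical map `t : (a, x) ↦ a ⊗ x`, its characteristic inner product identity,
density of the image, and the canonical left action `π_ρ` of `A`. -/
structure KSGNSData {A B X : Type u} [NonUnitalCStarAlgebra A] [NonUnitalCStarAlgebra B]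
    [NormedAddCommGroup X] [NormedSpace ℂ X] [CompleteSpace X]
    (hX : HilbertModule B X) (ρ : A → X → X)
    (E : Type u) [NormedAddCommGroup E] [NormedSpace ℂ E] [CompleteSpace E] :
    Type u where
  str : HilbertModule B E
  t : A → X → E
  t_add_left : ∀ a a' x, t (a + a') x = t a x + t a' x
  t_add_right : ∀ a x x', t a (x + x') = t a x + t a x'
  inner_t : ∀ a₁ x₁ a₂ x₂,
    str.inner (t a₁ x₁) (t a₂ x₂) = hX.inner x₁ (ρ (star a₁ * a₂) x₂)
  dense : (Submodule.span ℂ (Set.range fun p : A × X => t p.1 p.2)).topologicalClosure = ⊤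
  act : A → E → E
  act_t : ∀ a a' x, act a (t a' x) = t (a * a') x
  act_add : ∀ a e e', act a (e + e') = act a e + act a e'
  act_adjoint : ∀ a, HilbertModule.IsAdjointPair str str (act a) (act (star a))

/-- The interior (balanced) tensor product `X ⊗_B Y` of a right Hilbert
`B`-module `X` with a Hilbert `C`-module `Y` carrying a left `B`-action `actY`,
presented via the canonical bilinear map `mk2 : (x, y) ↦ x ⊗ y` with its
characteristic inner product identity and density of elementary tensors. -/
structure TensorData {B C X Y : Type u} [NonUnitalCStarAlgebra B] [NonUnitalCStarAlgebra C]
    [NormedAddCommGroup X] [NormedSpace ℂ X] [CompleteSpace X]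
    [NormedAddCommGroup Y] [NormedSpace ℂ Y] [CompleteSpace Y]
    (hX : HilbertModule B X) (hY : HilbertModule C Y) (actY : B → Y → Y)
    (T : Type u) [NormedAddCommGroup T] [NormedSpace ℂ T] [CompleteSpace T] :
    Type u where
  str : HilbertModule C T
  mk2 : X → Y → T
  mk2_add_left : ∀ x x' y, mk2 (x + x') y = mk2 x y + mk2 x' y
  mk2_add_right : ∀ x y y', mk2 x (y + y') = mk2 x y + mk2 x y'
  mk2_balanced : ∀ x b y, mk2 (hX.smulR x b) y = mk2 x (actY b y)
  inner_mk2 : ∀ x₁ y₁ x₂ y₂,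
    str.inner (mk2 x₁ y₁) (mk2 x₂ y₂) = hY.inner y₁ (actY (hX.inner x₁ x₂) y₂)
  dense : (Submodule.span ℂ (Set.range fun p : X × Y => mk2 p.1 p.2)).topologicalClosure = ⊤

section HilbertModuleLemmas

attribute [local instance] CStarAlgebra.spectralOrder CStarAlgebra.spectralOrderedRing

lemma isPositiveElem_iff_nonneg {B : Type u} [NonUnitalCStarAlgebra B] {b : B} :
    IsPositiveElem b ↔ 0 ≤ b :=
  CStarAlgebra.nonneg_iff_eq_star_mul_self.symm

namespace HilbertModule

variable {B X : Type u} [NonUnitalCStarAlgebra B]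
  [NormedAddCommGroup X] [NormedSpace ℂ X] [CompleteSpace X] (hX : HilbertModule B X)

lemma inner_smulC_left (c : ℂ) (x y : X) : hX.inner (c • x) y = star c • hX.inner x y := by
  rw [← hX.star_inner, hX.inner_smulC_right, star_smul, hX.star_inner]

lemma inner_smulR_left (x y : X) (b : B) :
    hX.inner (hX.smulR x b) y = star b * hX.inner x y := by
  rw [← hX.star_inner, hX.inner_smulR_right, star_mul, hX.star_inner]

/-- The inner product of a Hilbert module as a sesquilinear map. -/
def innerₛₗ : X →ₗ⋆[ℂ] X →ₗ[ℂ] B where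
  toFun x :=
    { toFun := hX.inner x
      map_add' := hX.inner_add_right x
      map_smul' := fun c y => hX.inner_smulC_right c x y }
  map_add' x y := LinearMap.ext fun z => hX.inner_add_left x y z
  map_smul' c x := LinearMap.ext fun z => hX.inner_smulC_left c x z

lemma inner_sub_right (x y z : X) : hX.inner x (y - z) = hX.inner x y - hX.inner x z :=
  map_sub (hX.innerₛₗ x) y z

lemma inner_sub_left (x y z : X) : hX.inner (x - y) z = hX.inner x z - hX.inner y z :=
  DFunLike.congr_fun (map_sub hX.innerₛₗ x y) z

lemma inner_sum_right {ι : Type*} (s : Finset ι) (x : X) (y : ι → X) :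
    hX.inner x (∑ i ∈ s, y i) = ∑ i ∈ s, hX.inner x (y i) :=
  map_sum (hX.innerₛₗ x) y s

lemma inner_sum_left {ι : Type*} (s : Finset ι) (x : ι → X) (y : X) :
    hX.inner (∑ i ∈ s, x i) y = ∑ i ∈ s, hX.inner (x i) y := by
  rw [← hX.star_inner, inner_sum_right, star_sum]
  simp only [hX.star_inner]

lemma inner_self_nonneg (x : X) : 0 ≤ hX.inner x x :=
  isPositiveElem_iff_nonneg.1 (hX.inner_self_pos x)

lemma eq_zero_of_inner_self {x : X} (h : hX.inner x x = 0) : x = 0 := by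
  have := hX.norm_inner_self x
  rw [h] at this
  simpa using this

/-- The Cauchy–Schwarz inequality for Hilbert modules. -/
lemma norm_inner_le (x y : X) : ‖hX.inner x y‖ ≤ ‖x‖ * ‖y‖ := by
  have key : ∀ x : X, ‖x‖ ≤ 1 → ‖hX.inner x y‖ ≤ ‖y‖ := by
    intro x hx
    set a := hX.inner x y with ha
    have h1 : star a * hX.inner x x * a ≤ star a * a := by
      refine (CStarAlgebra.star_left_conjugate_le_norm_smul
        (IsSelfAdjoint.of_nonneg (hX.inner_self_nonneg x))).trans ?_
      rw [← hX.norm_inner_self]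
      have h0 : (0 : B) ≤ star a * a := star_mul_self_nonneg a
      have h3 : 0 ≤ (1 - ‖x‖ ^ 2) • (star a * a) :=
        smul_nonneg (by nlinarith [norm_nonneg x]) h0
      rw [sub_smul, one_smul] at h3
      exact sub_nonneg.1 h3
    have h2 := hX.inner_self_nonneg (y - hX.smulR x a)
    have hyx : hX.inner y x = star a := (hX.star_inner x y).symm
    simp only [inner_sub_right, inner_sub_left, inner_smulR_right, inner_smulR_left, hyx,
      ← ha] at h2
    have h3 : star a * a ≤ hX.inner y y := by
      rw [← sub_nonneg]
      calc (0 : B) ≤ _ := add_nonneg h2 (sub_nonneg.2 h1)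
        _ = _ := by simp only [sub_mul]; abel
    have h4 := CStarAlgebra.norm_le_norm_of_nonneg_of_le (star_mul_self_nonneg a) h3
    rw [CStarRing.norm_star_mul_self, ← hX.norm_inner_self] at h4
    nlinarith [norm_nonneg a, norm_nonneg y]
  rcases eq_or_ne x 0 with rfl | hx
  · have : hX.inner 0 y = 0 := DFunLike.congr_fun (map_zero hX.innerₛₗ) y
    simp [this]
  · have hx' : 0 < ‖x‖ := norm_pos_iff.2 hx
    have := key (((‖x‖⁻¹ : ℝ) : ℂ) • x) (by rw [norm_smul]; simp [hx'.ne'])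
    rw [inner_smulC_left, norm_smul] at this
    simp only [norm_star, Complex.norm_real, norm_inv, norm_norm] at this
    rwa [inv_mul_le_iff₀ hx'] at this

/-- The inner product of a Hilbert module as a continuous sesquilinear map. -/
def innerSL : X →L⋆[ℂ] X →L[ℂ] B :=
  hX.innerₛₗ.mkContinuous₂ 1 fun x y => by rw [one_mul]; exact hX.norm_inner_le x y

lemma innerSL_apply (x y : X) : hX.innerSL x y = hX.inner x y := rfl

lemma continuous_inner : Continuous fun p : X × X => hX.inner p.1 p.2 :=
  (hX.innerSL.continuous.comp continuous_fst).clm_apply continuous_snd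

lemma eq_zero_of_forall_inner_eq_zero {ι : Type*} {j : ι → X}
    (hj : Dense (Submodule.span ℂ (Set.range j) : Set X)) {x : X}
    (h : ∀ i, hX.inner (j i) x = 0) : x = 0 := by
  refine hX.eq_zero_of_inner_self ?_
  have : hX.innerSL.flip x = 0 := ContinuousLinearMap.ext_on hj (by rintro _ ⟨i, rfl⟩; exact h i)
  exact DFunLike.congr_fun this x

lemma eq_of_forall_inner_eq {ι : Type*} {j : ι → X}
    (hj : Dense (Submodule.span ℂ (Set.range j) : Set X)) {x y : X}
    (h : ∀ i, hX.inner (j i) x = hX.inner (j i) y) : x = y :=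
  sub_eq_zero.1 <| hX.eq_zero_of_forall_inner_eq_zero hj fun i => by
    rw [inner_sub_right, h, sub_self]

/-- A map into a Hilbert module whose matrix coefficients against a total family are continuous
and linear is itself continuous and linear, by the closed graph theorem. -/
lemma exists_clm_of_forall_inner {V : Type*} [NormedAddCommGroup V] [NormedSpace ℂ V]
    [CompleteSpace V] {ι : Type*} {j : ι → X}
    (hj : Dense (Submodule.span ℂ (Set.range j) : Set X)) (T : V → X)
    (h : ∀ i, ∃ f : V →L[ℂ] B, ∀ v, hX.inner (j i) (T v) = f v) :
    ∃ L : V →L[ℂ] X, ∀ v, L v = T v := by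
  choose f hf using h
  let T' : V →ₗ[ℂ] X :=
    { toFun := T
      map_add' := fun v w => hX.eq_of_forall_inner_eq hj fun i => by
        rw [hX.inner_add_right, hf, hf, hf, map_add]
      map_smul' := fun c v => hX.eq_of_forall_inner_eq hj fun i => by
        rw [RingHom.id_apply, hX.inner_smulC_right, hf, hf, map_smul] }
  refine ⟨⟨T', T'.continuous_of_seq_closed_graph fun u x y hu hy => ?_⟩, fun v => rfl⟩
  refine hX.eq_of_forall_inner_eq hj fun i => ?_
  have h1 := ((hX.innerSL (j i)).continuous.tendsto y).comp hy
  have h2 := ((f i).continuous.tendsto x).comp hu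
  refine (tendsto_nhds_unique h1 ?_).trans (hf i x).symm
  exact h2.congr fun n => (hf i (u n)).symm

variable {Y : Type u} [NormedAddCommGroup Y] [NormedSpace ℂ Y] [CompleteSpace Y]
  {hX} {hY : HilbertModule B Y}

lemma IsAdjointPair.symm {T : X → Y} {S : Y → X} (h : IsAdjointPair hX hY T S) :
    IsAdjointPair hY hX S T := fun y x => by
  rw [← hX.star_inner, ← h, hY.star_inner]

lemma IsAdjointPair.exists_clm {T : X → Y} {S : Y → X} (h : IsAdjointPair hX hY T S) :
    ∃ L : X →L[ℂ] Y, ∀ x, L x = T x :=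
  hY.exists_clm_of_forall_inner (j := id) (by simp) T fun y =>
    ⟨hX.innerSL (S y), fun x => (h.symm y x).symm⟩

variable (hX hY) in
/-- Two total families with the same Gram matrix are intertwined by a unitary. -/
lemma exists_unitary_of_inner_eq {ι : Type*} {j : ι → X} {k : ι → Y}
    (hj : Dense (Submodule.span ℂ (Set.range j) : Set X))
    (hk : Dense (Submodule.span ℂ (Set.range k) : Set Y))
    (h : ∀ i i', hY.inner (k i) (k i') = hX.inner (j i) (j i')) :
    ∃ U : X →L[ℂ] Y, Function.Surjective U ∧ (∀ v w, hY.inner (U v) (U w) = hX.inner v w) ∧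
      ∀ i, U (j i) = k i := by
  let e := Finsupp.linearCombination ℂ j
  let f := Finsupp.linearCombination ℂ k
  have hinner : ∀ v w : ι →₀ ℂ, hY.inner (f v) (f w) = hX.inner (e v) (e w) := by
    intro v w
    simp only [e, f, Finsupp.linearCombination_apply, Finsupp.sum, inner_sum_left,
      inner_sum_right, inner_smulC_left, inner_smulC_right, h]
  have hnorm : ∀ v, ‖f v‖ ≤ 1 * ‖e v‖ := fun v => by
    rw [one_mul]
    refine le_of_eq ?_
    rw [← sq_eq_sq₀ (norm_nonneg _) (norm_nonneg _), hY.norm_inner_self, hX.norm_inner_self,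
      hinner]
  have he : DenseRange e := by
    rw [← Finsupp.range_linearCombination] at hj
    exact hj
  let U := f.extendOfNorm e
  have hU : ∀ v, U (e v) = f v := LinearMap.extendOfNorm_eq he ⟨1, hnorm⟩
  have hUj : ∀ i, U (j i) = k i := fun i => by
    simpa [e, f] using hU (Finsupp.single i 1)
  have hUinner : ∀ v w, hY.inner (U v) (U w) = hX.inner v w := by
    intro v w
    refine he.induction_on₂ (p := fun v w => hY.inner (U v) (U w) = hX.inner v w) ?_ ?_ v w
    · exact isClosed_eq (hY.continuous_inner.comp (U.continuous.prodMap U.continuous))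
        hX.continuous_inner
    · intro v w
      rw [hU, hU, hinner]
  have hiso : Isometry U := AddMonoidHomClass.isometry_of_norm U fun v => by
    rw [← sq_eq_sq₀ (norm_nonneg _) (norm_nonneg _), hY.norm_inner_self, hX.norm_inner_self,
      hUinner]
  refine ⟨U, fun y => ?_, hUinner, hUj⟩
  have hle : Submodule.span ℂ (Set.range k) ≤ LinearMap.range U.toLinearMap :=
    Submodule.span_le.2 (by rintro _ ⟨i, rfl⟩; exact ⟨j i, hUj i⟩)
  have hcl : IsClosed (Set.range U) := hiso.isClosedEmbedding.isClosed_range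
  have hd : Dense (Set.range U) := hk.mono hle
  have : y ∈ closure (Set.range U) := hd y
  rwa [hcl.closure_eq] at this

end HilbertModule

/-- The Jordan decomposition of a selfadjoint element of a C⋆-algebra. -/
lemma exists_star_mul_self_sub_eq_of_isSelfAdjoint {B : Type*} [NonUnitalCStarAlgebra B] {a : B}
    (ha : IsSelfAdjoint a) : ∃ p n r : B, star n = n ∧ star p * p - n = a ∧
      n * (star p * p) = 0 ∧ n * n * n = star r * r := by
  have hn0 : 0 ≤ a⁻ := CFC.negPart_nonneg a
  have hns : star a⁻ = a⁻ := (IsSelfAdjoint.of_nonneg hn0).star_eq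
  obtain ⟨p, hp⟩ := CStarAlgebra.nonneg_iff_eq_star_mul_self.1 (CFC.posPart_nonneg a)
  obtain ⟨r, hr⟩ := CStarAlgebra.nonneg_iff_eq_star_mul_self.1 (star_left_conjugate_nonneg hn0 a⁻)
  refine ⟨p, a⁻, r, hns, ?_, ?_, ?_⟩
  · rw [← hp, CFC.posPart_sub_negPart a ha]
  · rw [← hp, CFC.negPart_mul_posPart]
  · rw [← hr, hns]

/-- A matrix over a C⋆-algebra whose quadratic form is positive has the form `Rᴴ * R`. -/
lemma exists_gram_of_forall_sum_nonneg {B : Type u} [NonUnitalCStarAlgebra B] {ι : Type*}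
    [Fintype ι] (P : ι → ι → B) (hstar : ∀ k l, star (P k l) = P l k)
    (hpos : ∀ b : ι → B, 0 ≤ ∑ k, ∑ l, star (b k) * P k l * b l) :
    ∃ R : ι → ι → B, ∀ k l, P k l = ∑ m, star (R m k) * R m l := by
  let M : CStarMatrix ι ι B := CStarMatrix.ofMatrix P
  have hM : IsSelfAdjoint M := CStarMatrix.ext fun k l => hstar l k
  obtain ⟨R, n, r, hns, hsplit, hnp, hr⟩ := exists_star_mul_self_sub_eq_of_isSelfAdjoint hM
  have hcube : star n * M * n = -(star r * r) := by
    rw [← hsplit, hns, mul_sub, hnp, zero_sub, neg_mul, hr]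
  have hr0 : r = 0 := by
    refine CStarMatrix.ext fun m k => ?_
    have h1 : 0 ≤ (star n * M * n) k k := by
      have := hpos fun l => n l k
      rw [Finset.sum_comm] at this
      simp only [CStarMatrix.mul_apply, CStarMatrix.star_apply, Finset.sum_mul]
      exact this
    have h2 : (star n * M * n) k k = -∑ m, star (r m k) * r m k := by
      rw [hcube, CStarMatrix.neg_apply, CStarMatrix.mul_apply]
      rfl
    have h3 : ∑ m, star (r m k) * r m k = 0 :=
      le_antisymm (by rw [h2] at h1; exact neg_nonneg.1 h1)
        (Finset.sum_nonneg fun m _ => star_mul_self_nonneg _)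
    have h4 := (Finset.sum_eq_zero_iff_of_nonneg fun m _ => star_mul_self_nonneg (r m k)).1 h3 m
      (Finset.mem_univ m)
    exact CStarRing.star_mul_self_eq_zero_iff _ |>.1 h4
  have hn_zero : n = 0 := by
    have h1 : n * n * n = 0 := by
      rw [hr, hr0, mul_zero]
    have h2 : star (star n * n) * (star n * n) = 0 := by
      rw [star_mul, star_star, hns, ← mul_assoc, h1, zero_mul]
    exact CStarRing.star_mul_self_eq_zero_iff _ |>.1 (CStarRing.star_mul_self_eq_zero_iff _ |>.1 h2)
  refine ⟨R, fun k l => ?_⟩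
  have : M k l = (star R * R) k l := by
    rw [← hsplit, hn_zero, sub_zero]
  rw [CStarMatrix.mul_apply] at this
  exact this

/-- An element of norm at most one satisfies `star b * b = 1 - (1 - c) ^ 2` for a selfadjoint `c`,
a relation that makes sense without a unit. -/
lemma exists_isSelfAdjoint_add_sub_mul_eq {B : Type u} [NonUnitalCStarAlgebra B] {b : B}
    (hb : ‖b‖ ≤ 1) : ∃ c : B, star c = c ∧ c + c - c * c = star b * b := by
  set h := star b * b with hh
  have hsa : IsSelfAdjoint h := IsSelfAdjoint.star_mul_self b
  let f : ℝ → ℝ := fun t => 1 - √(1 - t)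
  have hf : Continuous f := by fun_prop
  have hf0 : f 0 = 0 := by simp [f]
  refine ⟨cfcₙ f h, (cfcₙ_predicate f h).star_eq, ?_⟩
  rw [← cfcₙ_add f f h, ← cfcₙ_mul f f h, ← cfcₙ_sub _ _ h]
  conv_rhs => rw [← cfcₙ_id ℝ h]
  refine cfcₙ_congr fun t ht => ?_
  have ht1 : t ≤ 1 := by
    have h1 : ‖t‖ ≤ ‖h‖ := NonUnitalIsometricContinuousFunctionalCalculus.norm_quasispectrum_le h ht
    have h2 : ‖h‖ ≤ 1 := by rw [hh, CStarRing.norm_star_mul_self]; nlinarith [norm_nonneg b]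
    exact (le_abs_self t).trans (h1.trans h2)
  have := Real.sq_sqrt (sub_nonneg.2 ht1)
  simp only [f, id]
  nlinarith

namespace IsCorrespondenceAction

variable {A B X : Type u} [NonUnitalCStarAlgebra A] [NonUnitalCStarAlgebra B]
  [NormedAddCommGroup X] [NormedSpace ℂ X] [CompleteSpace X]
  {hX : HilbertModule B X} {φ : A → X → X}

/-- The orbit map `a ↦ φ a x` as a linear map. -/
def orbitₗ (hφ : IsCorrespondenceAction hX φ) (x : X) : A →ₗ[ℂ] X where
  toFun a := φ a x
  map_add' a a' := hφ.map_add a a' x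
  map_smul' c a := hφ.map_smul c a x

lemma norm_apply_le_of_norm_le_one (hφ : IsCorrespondenceAction hX φ) {a : A} (ha : ‖a‖ ≤ 1)
    (x : X) : ‖φ a x‖ ≤ ‖x‖ := by
  obtain ⟨c, hc, hca⟩ := exists_isSelfAdjoint_add_sub_mul_eq ha
  have h1 : hX.inner (φ a x) (φ a x) = hX.inner x (φ (star a * a) x) := by
    rw [hφ.map_mul]
    exact hφ.star_adjoint a x _
  have h2 : φ (star a * a) x = φ c x + φ c x - φ c (φ c x) := by
    rw [← hca]
    change hφ.orbitₗ x (c + c - c * c) = _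
    rw [map_sub, _root_.map_add]
    exact congrArg _ (hφ.map_mul c c x)
  have hadj : ∀ y z, hX.inner (φ c y) z = hX.inner y (φ c z) := fun y z => by
    simpa only [hc] using hφ.star_adjoint c y z
  have h3 := hX.inner_self_nonneg (x - φ c x)
  have h4 : hX.inner (φ a x) (φ a x) ≤ hX.inner x x := by
    rw [← sub_nonneg, h1, h2]
    convert h3 using 1
    simp only [hX.inner_sub_right, hX.inner_sub_left, hX.inner_add_right, hadj]
    abel
  have h5 := CStarAlgebra.norm_le_norm_of_nonneg_of_le (hX.inner_self_nonneg _) h4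
  rw [← hX.norm_inner_self, ← hX.norm_inner_self] at h5
  exact (sq_le_sq₀ (norm_nonneg _) (norm_nonneg _)).1 h5

/-- A correspondence action is contractive. -/
lemma norm_apply_le (hφ : IsCorrespondenceAction hX φ) (a : A) (x : X) :
    ‖φ a x‖ ≤ ‖x‖ * ‖a‖ := by
  rcases eq_or_ne a 0 with rfl | ha
  · have : φ 0 x = 0 := map_zero (hφ.orbitₗ x)
    simp [this]
  · have ha' : 0 < ‖a‖ := norm_pos_iff.2 ha
    have := hφ.norm_apply_le_of_norm_le_one (a := ((‖a‖⁻¹ : ℝ) : ℂ) • a)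
      (by rw [norm_smul]; simp [ha'.ne']) x
    rw [hφ.map_smul, norm_smul, Complex.norm_real, norm_inv, norm_norm, inv_mul_le_iff₀ ha'] at this
    rwa [mul_comm]

/-- The orbit map `a ↦ φ a x` as a continuous linear map. -/
def orbit (hφ : IsCorrespondenceAction hX φ) (x : X) : A →L[ℂ] X :=
  (hφ.orbitₗ x).mkContinuous ‖x‖ fun a => hφ.norm_apply_le a x

lemma orbit_apply (hφ : IsCorrespondenceAction hX φ) (x : X) (a : A) : hφ.orbit x a = φ a x := rfl

/-- A correspondence action sends positive matrices to positive quadratic forms. -/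
lemma sum_inner_nonneg (hφ : IsCorrespondenceAction hX φ) {ι : Type*} [Fintype ι]
    (P : ι → ι → A) (hstar : ∀ k l, star (P k l) = P l k)
    (hpos : ∀ b : ι → A, 0 ≤ ∑ k, ∑ l, star (b k) * P k l * b l) (x : ι → X) :
    0 ≤ ∑ k, ∑ l, hX.inner (x k) (φ (P k l) (x l)) := by
  obtain ⟨R, hR⟩ := exists_gram_of_forall_sum_nonneg P hstar hpos
  have : ∑ k, ∑ l, hX.inner (x k) (φ (P k l) (x l)) =
      ∑ m, hX.inner (∑ k, φ (R m k) (x k)) (∑ k, φ (R m k) (x k)) := by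
    have h1 : ∀ k l, hX.inner (x k) (φ (P k l) (x l)) =
        ∑ m, hX.inner (φ (R m k) (x k)) (φ (R m l) (x l)) := fun k l => by
      rw [hR, ← hφ.orbit_apply, map_sum, hX.inner_sum_right]
      refine Finset.sum_congr rfl fun m _ => ?_
      rw [hφ.orbit_apply, hφ.map_mul]
      exact (hφ.star_adjoint _ _ _).symm
    simp only [h1, hX.inner_sum_left, hX.inner_sum_right]
    rw [Finset.sum_comm' (t' := Finset.univ) (s' := fun _ => Finset.univ) (by simp)]
    conv_lhs => enter [2, l]; rw [Finset.sum_comm]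
    rw [Finset.sum_comm]
    refine Finset.sum_congr rfl fun m _ => Finset.sum_comm
  rw [this]
  exact Finset.sum_nonneg fun m _ => hX.inner_self_nonneg _

end IsCorrespondenceAction

lemma ContinuousLinearMap.apply_mem_of_dense_span {V W : Type*} [NormedAddCommGroup V]
    [NormedSpace ℂ V] [NormedAddCommGroup W] [NormedSpace ℂ W] {ι : Type*} {j : ι → V}
    (hj : Dense (Submodule.span ℂ (Set.range j) : Set V)) (L : V →L[ℂ] W) {S : Submodule ℂ W}
    (hS : IsClosed (S : Set W)) (h : ∀ i, L (j i) ∈ S) (v : V) : L v ∈ S := by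
  have hle : Submodule.span ℂ (Set.range j) ≤ S.comap L.toLinearMap :=
    Submodule.span_le.2 (by rintro _ ⟨i, rfl⟩; exact h i)
  have hcl : IsClosed (L ⁻¹' (S : Set W)) := hS.preimage L.continuous
  have hv : v ∈ closure (L ⁻¹' (S : Set W)) := hj.mono hle v
  rwa [hcl.closure_eq] at hv

/-- A uniformly bounded sequence of operators that is pointwise Cauchy on a total family is
pointwise Cauchy. -/
lemma cauchySeq_apply_of_dense_span {V W : Type*} [NormedAddCommGroup V] [NormedSpace ℂ V]
    [NormedAddCommGroup W] [NormedSpace ℂ W] {ι : Type*} {j : ι → V}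
    (hj : Dense (Submodule.span ℂ (Set.range j) : Set V)) (L : ℕ → V →L[ℂ] W) {C : ℝ}
    (hC : ∀ n v, ‖L n v‖ ≤ C * ‖v‖) (h : ∀ i, CauchySeq fun n => L n (j i)) (v : V) :
    CauchySeq fun n => L n v := by
  have hspan : ∀ w ∈ Submodule.span ℂ (Set.range j), CauchySeq fun n => L n w := by
    intro w hw
    induction hw using Submodule.span_induction with
    | mem w hw => obtain ⟨i, rfl⟩ := hw; exact h i
    | zero => simpa using cauchySeq_const (0 : W)
    | add w w' _ _ hw hw' => simp only [map_add]; exact hw.add hw'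
    | smul c w _ hw =>
      simp only [map_smul]
      exact (uniformContinuous_const_smul c).comp_cauchySeq hw
  rw [Metric.cauchySeq_iff']
  intro ε hε
  have hD : 0 < |C| + 1 := by positivity
  obtain ⟨w, hw, hvw⟩ := Metric.dense_iff.1 hj v (ε / (4 * (|C| + 1))) (by positivity)
  have hclose : ∀ n, ‖L n w - L n v‖ ≤ ε / 4 := fun n => by
    rw [← map_sub]
    have h1 : ‖w - v‖ ≤ ε / (4 * (|C| + 1)) := by
      rw [← dist_eq_norm]
      exact (Metric.mem_ball.1 hw).le
    calc ‖L n (w - v)‖ ≤ C * ‖w - v‖ := hC n _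
      _ ≤ (|C| + 1) * (ε / (4 * (|C| + 1))) := by
          gcongr
          exact (le_abs_self C).trans (by linarith)
      _ = ε / 4 := by field_simp
  obtain ⟨N, hN⟩ := Metric.cauchySeq_iff'.1 (hspan w hvw) (ε / 4) (by positivity)
  refine ⟨N, fun n hn => ?_⟩
  have h1 := hclose n
  have h2 := hclose N
  have h3 := hN n hn
  rw [dist_eq_norm] at h3 ⊢
  calc ‖L n v - L N v‖ = ‖-(L n w - L n v) + (L n w - L N w) + (L N w - L N v)‖ := by
        congr 1; abel
    _ ≤ ‖-(L n w - L n v)‖ + ‖L n w - L N w‖ + ‖L N w - L N v‖ := norm_add₃_le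
    _ < ε := by rw [norm_neg]; linarith

/-- Geometric growth and the doubling inequality `q m ^ 2 ≤ q 0 * q (2 * m)` force the
first step to satisfy the geometric bound without a constant. -/
lemma le_mul_of_sq_le_mul_double {q : ℕ → ℝ} {M r : ℝ} (hq : ∀ m, 0 ≤ q m) (hr : 0 ≤ r)
    (hdouble : ∀ m, q m ^ 2 ≤ q 0 * q (2 * m)) (hgrowth : ∀ m, q m ≤ M * r ^ m) :
    q 1 ≤ r * q 0 := by
  have hiter : ∀ n : ℕ, q 1 ^ 2 ^ n * q 0 ≤ q 0 ^ 2 ^ n * q (2 ^ n) := by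
    intro n
    induction n with
    | zero => simp [mul_comm]
    | succ n ih =>
      rcases (hq 0).eq_or_lt with h0 | h0
      · rw [← h0]
        simp
      · refine le_of_mul_le_mul_right ?_ h0
        calc q 1 ^ 2 ^ (n + 1) * q 0 * q 0 = (q 1 ^ 2 ^ n * q 0) ^ 2 := by ring
          _ ≤ (q 0 ^ 2 ^ n * q (2 ^ n)) ^ 2 :=
            pow_le_pow_left₀ (mul_nonneg (pow_nonneg (hq 1) _) h0.le) ih 2
          _ = q 0 ^ 2 ^ (n + 1) * q (2 ^ n) ^ 2 := by ring
          _ ≤ q 0 ^ 2 ^ (n + 1) * (q 0 * q (2 * 2 ^ n)) := by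
            gcongr
            exact hdouble _
          _ = q 0 ^ 2 ^ (n + 1) * q (2 ^ (n + 1)) * q 0 := by rw [pow_succ' 2 n]; ring
  by_contra! hlt
  rcases (hq 0).eq_or_lt with h0 | h0
  · have h1 := hdouble 1
    rw [← h0] at h1 hlt
    nlinarith [hq 1]
  have hbound : ∀ n : ℕ, q 1 ^ 2 ^ n * q 0 ≤ M * (r * q 0) ^ 2 ^ n := fun n =>
    (hiter n).trans <| by
      rw [mul_pow]
      calc q 0 ^ 2 ^ n * q (2 ^ n) ≤ q 0 ^ 2 ^ n * (M * r ^ 2 ^ n) := by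
            gcongr
            exact hgrowth _
        _ = _ := by ring
  have hq1 : 0 < q 1 := (mul_nonneg hr h0.le).trans_lt hlt
  rcases hr.eq_or_lt with hr0 | hr0
  · have h1 := hbound 0
    rw [← hr0] at h1
    norm_num at h1
    nlinarith
  · have hs : 0 < r * q 0 := mul_pos hr0 h0
    obtain ⟨n, hn⟩ := pow_unbounded_of_one_lt (M / q 0) ((one_lt_div hs).2 hlt)
    have h1 : (q 1 / (r * q 0)) ^ n ≤ (q 1 / (r * q 0)) ^ 2 ^ n :=
      pow_le_pow_right₀ ((one_lt_div hs).2 hlt).le Nat.lt_two_pow_self.le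
    have h2 := hn.trans_le h1
    rw [div_pow, div_lt_div_iff₀ h0 (pow_pos hs _)] at h2
    exact absurd (hbound n) (not_le.2 h2)

namespace TensorData

variable {B C X Y Z : Type u} [NonUnitalCStarAlgebra B] [NonUnitalCStarAlgebra C]
  [NormedAddCommGroup X] [NormedSpace ℂ X] [CompleteSpace X]
  [NormedAddCommGroup Y] [NormedSpace ℂ Y] [CompleteSpace Y]
  [NormedAddCommGroup Z] [NormedSpace ℂ Z] [CompleteSpace Z]
  {hX : HilbertModule B X} {hY : HilbertModule C Y} {φ : B → Y → Y}
  (TD : TensorData hX hY φ Z)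

lemma dense_span :
    Dense (Submodule.span ℂ (Set.range fun p : X × Y => TD.mk2 p.1 p.2) : Set Z) :=
  Submodule.dense_iff_topologicalClosure_eq_top.2 TD.dense

/-- Tensoring with a fixed vector on the right is continuous and linear. -/
lemma exists_clm_left (hφ : IsCorrespondenceAction hY φ) (y : Y) :
    ∃ L : X →L[ℂ] Z, ∀ x, L x = TD.mk2 x y :=
  TD.str.exists_clm_of_forall_inner TD.dense_span _ fun p =>
    ⟨(hY.innerSL p.2).comp ((hφ.orbit y).comp (hX.innerSL p.1)), fun x =>
      TD.inner_mk2 p.1 p.2 x y⟩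

/-- The formal version of `T ⊗ Id`, defined on formal combinations of elementary tensors. -/
def amplify (T : X →L[ℂ] X) : (X × Y →₀ ℂ) →ₗ[ℂ] Z :=
  Finsupp.linearCombination ℂ fun p => TD.mk2 (T p.1) p.2

lemma inner_amplify {T S : X →L[ℂ] X} (h : HilbertModule.IsAdjointPair hX hX T S)
    (T' : X →L[ℂ] X) (v w : X × Y →₀ ℂ) :
    TD.str.inner (TD.amplify T v) (TD.amplify T' w) =
      TD.str.inner (TD.amplify 1 v) (TD.amplify (S * T') w) := by
  have h' : ∀ x y : X, hX.inner (T x) y = hX.inner x (S y) := h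
  simp only [amplify, Finsupp.linearCombination_apply, Finsupp.sum, HilbertModule.inner_sum_left,
    HilbertModule.inner_sum_right, HilbertModule.inner_smulC_left,
    HilbertModule.inner_smulC_right, TD.inner_mk2, h', mul_apply_eq_comp,
    one_apply_eq_self]

lemma exists_norm_amplify_pow_le (hφ : IsCorrespondenceAction hY φ) (R : X →L[ℂ] X)
    (v : X × Y →₀ ℂ) : ∃ M : ℝ, ∀ m : ℕ, ‖TD.amplify (R ^ m) v‖ ≤ M * ‖R‖ ^ m := by
  choose L hL using TD.exists_clm_left hφ
  have hpow : ∀ (m : ℕ) (x : X), ‖(R ^ m) x‖ ≤ ‖R‖ ^ m * ‖x‖ := by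
    intro m x
    induction m with
    | zero => simp
    | succ m ih =>
      rw [pow_succ' R, mul_apply_eq_comp, pow_succ', mul_assoc]
      exact (R.le_opNorm _).trans (by gcongr)
  refine ⟨∑ p ∈ v.support, ‖v p‖ * (‖L p.2‖ * ‖p.1‖), fun m => ?_⟩
  rw [amplify, Finsupp.linearCombination_apply, Finsupp.sum, Finset.sum_mul]
  refine norm_sum_le_of_le _ fun p _ => ?_
  rw [norm_smul, ← hL, mul_assoc, mul_assoc]
  gcongr
  refine ((L p.2).le_opNorm _).trans ?_
  gcongr
  rw [mul_comm]
  exact hpow m p.1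

/-- `T ⊗ Id` is bounded on formal combinations of elementary tensors: with `R = S * T`, iterating
the Cauchy–Schwarz inequality reduces the bound to the geometric growth of `R ^ m ⊗ Id`. -/
lemma norm_amplify_le (hφ : IsCorrespondenceAction hY φ) {T S : X →L[ℂ] X}
    (h : HilbertModule.IsAdjointPair hX hX T S) (v : X × Y →₀ ℂ) :
    ‖TD.amplify T v‖ ≤ √(‖S‖ * ‖T‖) * ‖TD.amplify 1 v‖ := by
  have hR : HilbertModule.IsAdjointPair hX hX (S * T) (S * T) := fun x y => by
    rw [mul_apply_eq_comp, mul_apply_eq_comp, h.symm, h]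
  have hRpow : ∀ m : ℕ, HilbertModule.IsAdjointPair hX hX ⇑((S * T) ^ m) ⇑((S * T) ^ m) := by
    intro m
    induction m with
    | zero => intro x y; simp
    | succ m ih =>
      intro x y
      nth_rewrite 1 [pow_succ']
      rw [pow_succ, mul_apply_eq_comp, hR, ih]
      rfl
  obtain ⟨M, hM⟩ := TD.exists_norm_amplify_pow_le hφ (S * T) v
  have h1 := le_mul_of_sq_le_mul_double (q := fun m => ‖TD.amplify ((S * T) ^ m) v‖)
    (fun m => norm_nonneg _) (norm_nonneg _) (fun m => by
      rw [TD.str.norm_inner_self, TD.inner_amplify (hRpow m), ← pow_add, ← two_mul, pow_zero]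
      exact TD.str.norm_inner_le _ _) hM
  simp only [pow_one, pow_zero] at h1
  have h2 : ‖TD.amplify T v‖ ^ 2 ≤ (√(‖S‖ * ‖T‖) * ‖TD.amplify 1 v‖) ^ 2 := by
    rw [TD.str.norm_inner_self, TD.inner_amplify h, mul_pow, Real.sq_sqrt (by positivity)]
    calc _ ≤ ‖TD.amplify 1 v‖ * ‖TD.amplify (S * T) v‖ := TD.str.norm_inner_le _ _
      _ ≤ ‖TD.amplify 1 v‖ * (‖S‖ * ‖T‖ * ‖TD.amplify 1 v‖) := by
        gcongr
        exact h1.trans (by gcongr; exact norm_mul_le S T)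
      _ = _ := by ring
  exact (sq_le_sq₀ (norm_nonneg _) (by positivity)).1 h2

lemma denseRange_amplify_one : DenseRange (TD.amplify 1) := by
  have := TD.dense_span
  rw [← Finsupp.range_linearCombination] at this
  exact this

/-- The operator `T ⊗ Id` on an interior tensor product, for an adjointable `T`. -/
lemma exists_clm_tensor_id (hφ : IsCorrespondenceAction hY φ) {T S : X →L[ℂ] X}
    (h : HilbertModule.IsAdjointPair hX hX T S) :
    ∃ L : Z →L[ℂ] Z, (∀ x y, L (TD.mk2 x y) = TD.mk2 (T x) y) ∧
      ∀ z, ‖L z‖ ≤ √(‖S‖ * ‖T‖) * ‖z‖ := by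
  have hb := TD.norm_amplify_le hφ h
  refine ⟨(TD.amplify T).extendOfNorm (TD.amplify 1), fun x y => ?_, fun z =>
    LinearMap.norm_extendOfNorm_apply_le TD.denseRange_amplify_one _ hb z⟩
  have := LinearMap.extendOfNorm_eq TD.denseRange_amplify_one ⟨_, hb⟩ (Finsupp.single (x, y) 1)
  simpa [amplify] using this

lemma isAdjointPair_tensor_id {T S : X → X} (h : HilbertModule.IsAdjointPair hX hX T S)
    {L L' : Z →L[ℂ] Z} (hL : ∀ x y, L (TD.mk2 x y) = TD.mk2 (T x) y)
    (hL' : ∀ x y, L' (TD.mk2 x y) = TD.mk2 (S x) y) :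
    HilbertModule.IsAdjointPair TD.str TD.str L L' := by
  have h1 : ∀ (p : X × Y) (w : Z), TD.str.inner (L (TD.mk2 p.1 p.2)) w =
      TD.str.inner (TD.mk2 p.1 p.2) (L' w) := fun p w => by
    have : TD.str.innerSL (L (TD.mk2 p.1 p.2)) = (TD.str.innerSL (TD.mk2 p.1 p.2)).comp L' := by
      refine ContinuousLinearMap.ext_on TD.dense_span ?_
      rintro _ ⟨p', rfl⟩
      simp only [ContinuousLinearMap.comp_apply, HilbertModule.innerSL_apply, hL, hL',
        TD.inner_mk2, h p.1 p'.1]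
    exact DFunLike.congr_fun this w
  intro v w
  have : (TD.str.innerSL.flip w).comp L = TD.str.innerSL.flip (L' w) := by
    refine ContinuousLinearMap.ext_on TD.dense_span ?_
    rintro _ ⟨p, rfl⟩
    exact h1 p w
  exact DFunLike.congr_fun this v

end TensorData

namespace IsCPAction

variable {A B X : Type u} [NonUnitalCStarAlgebra A] [NonUnitalCStarAlgebra B]
  [NormedAddCommGroup X] [NormedSpace ℂ X] [CompleteSpace X]
  {hX : HilbertModule B X} {ρ : A → X → X}

/-- Complete positivity on the matrices `cᴴ * c` given by a row `c`. -/
lemma sum_inner_nonneg (hρ : IsCPAction hX ρ) {ι : Type*} [Fintype ι] (c : ι → A) (x : ι → X) :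
    0 ≤ ∑ k, ∑ l, hX.inner (x k) (ρ (star (c k) * c l) (x l)) := by
  have hfin : ∀ (n : ℕ) (c : Fin n → A) (x : Fin n → X),
      0 ≤ ∑ k, ∑ l, hX.inner (x k) (ρ (star (c k) * c l) (x l)) := by
    rintro (_ | n) c x
    · simp
    · refine isPositiveElem_iff_nonneg.1 (hρ.pos (n + 1) (.of fun i j => star (c i) * c j)
        ⟨.of fun i j => if i = 0 then c j else 0, ?_⟩ x)
      ext i j
      simp [Matrix.mul_apply]
  let e := Fintype.equivFin ι
  rw [← e.symm.sum_comp]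
  simp only [← e.symm.sum_comp fun l => hX.inner _ (ρ (star _ * c l) (x l))]
  exact hfin _ (c ∘ e.symm) (x ∘ e.symm)

/-- A completely positive map preserves adjoints of products `star c * d`, by polarization. -/
lemma star_inner_apply (hρ : IsCPAction hX ρ) (c d : A) (x y : X) :
    star (hX.inner x (ρ (star c * d) y)) = hX.inner y (ρ (star d * c) x) := by
  have hdiag : ∀ (c : A) (x : X), star (hX.inner x (ρ (star c * c) x)) =
      hX.inner x (ρ (star c * c) x) := fun c x => by
    have := hρ.sum_inner_nonneg (fun _ : Unit => c) fun _ => x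
    simp only [Finset.univ_unique, Finset.sum_singleton] at this
    exact (IsSelfAdjoint.of_nonneg this).star_eq
  have hpolar : ∀ y : X,
      star (hX.inner x (ρ (star c * d) y)) + star (hX.inner y (ρ (star d * c) x)) =
        hX.inner x (ρ (star c * d) y) + hX.inner y (ρ (star d * c) x) := fun y => by
    have := (IsSelfAdjoint.of_nonneg (hρ.sum_inner_nonneg ![c, d] ![x, y])).star_eq
    simp only [Fin.sum_univ_two, Matrix.cons_val_zero, Matrix.cons_val_one, star_add, hdiag] at this
    rw [← sub_eq_zero] at this ⊢
    rw [← this]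
    abel
  have h1 := hpolar y
  have h2 := hpolar (Complex.I • y)
  obtain ⟨S, hS⟩ := hρ.adjointable (star c * d)
  obtain ⟨T, hT⟩ := hS.exists_clm
  rw [← hT, _root_.map_smul, hT, hX.inner_smulC_right, hX.inner_smulC_left, star_smul,
    star_smul] at h2
  simp only [Complex.star_def, Complex.conj_I, map_neg, neg_smul, neg_neg] at h2
  have h3 : Complex.I • (star (hX.inner x (ρ (star c * d) y)) +
      hX.inner x (ρ (star c * d) y)) = Complex.I • (star (hX.inner y (ρ (star d * c) x)) +
      hX.inner y (ρ (star d * c) x)) := by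
    simp only [smul_add]
    linear_combination (norm := module) -h2
  have h4 := smul_right_injective B Complex.I_ne_zero h3
  have h5 : (2 : ℂ) • star (hX.inner x (ρ (star c * d) y)) =
      (2 : ℂ) • hX.inner y (ρ (star d * c) x) := by
    simp only [two_smul]
    linear_combination (norm := module) h1 + h4
  exact smul_right_injective B two_ne_zero h5

lemma sum_star_mul_inner_mul_nonneg (hρ : IsCPAction hX ρ) {ι : Type*} [Fintype ι] (c : ι → A)
    (x : ι → X) (b : ι → B) :
    0 ≤ ∑ k, ∑ l, star (b k) * hX.inner (x k) (ρ (star (c k) * c l) (x l)) * b l := by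
  convert hρ.sum_inner_nonneg c fun k => hX.smulR (x k) (b k) using 4 with k _ l
  obtain ⟨S, hS⟩ := hρ.adjointable (star (c k) * c l)
  rw [hX.inner_smulR_left, mul_assoc, ← hS.symm, ← hS.symm, hX.inner_smulR_right]

end IsCPAction

namespace TensorData

variable {A B C X Y Z : Type u} [NonUnitalCStarAlgebra A] [NonUnitalCStarAlgebra B]
  [NonUnitalCStarAlgebra C]
  [NormedAddCommGroup X] [NormedSpace ℂ X] [CompleteSpace X]
  [NormedAddCommGroup Y] [NormedSpace ℂ Y] [CompleteSpace Y]
  [NormedAddCommGroup Z] [NormedSpace ℂ Z] [CompleteSpace Z]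
  {hX : HilbertModule B X} {ρ : A → X → X} {hY : HilbertModule C Y} {φ : B → Y → Y}
  (TD : TensorData hX hY φ Z)

lemma sum_inner_mk2_nonneg (hρ : IsCPAction hX ρ) (hφ : IsCorrespondenceAction hY φ)
    {σ : A →ₗ[ℂ] Z →L[ℂ] Z} (hσ : ∀ a x y, σ a (TD.mk2 x y) = TD.mk2 (ρ a x) y)
    {ι : Type*} [Fintype ι] (c : ι → A) (x : ι → X) (y : ι → Y) :
    0 ≤ ∑ k, ∑ l, TD.str.inner (TD.mk2 (x k) (y k))
      (σ (star (c k) * c l) (TD.mk2 (x l) (y l))) := by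
  simp only [hσ, TD.inner_mk2]
  exact hφ.sum_inner_nonneg _ (fun k l => hρ.star_inner_apply _ _ _ _)
    (hρ.sum_star_mul_inner_mul_nonneg c x) y

lemma sum_inner_amplify_nonneg (hρ : IsCPAction hX ρ) (hφ : IsCorrespondenceAction hY φ)
    {σ : A →ₗ[ℂ] Z →L[ℂ] Z} (hσ : ∀ a x y, σ a (TD.mk2 x y) = TD.mk2 (ρ a x) y)
    {ι : Type*} [Fintype ι] (c : ι → A) (v : ι → X × Y →₀ ℂ) :
    0 ≤ ∑ k, ∑ l, TD.str.inner (TD.amplify 1 (v k))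
      (σ (star (c k) * c l) (TD.amplify 1 (v l))) := by
  classical
  choose L hL using TD.exists_clm_left hφ
  let s : Finset (X × Y) := Finset.univ.biUnion fun k => (v k).support
  have hv : ∀ k, TD.amplify 1 (v k) = ∑ p : s, TD.mk2 (v k p • p.1.1) p.1.2 := fun k => by
    rw [amplify, Finsupp.linearCombination_apply,
      Finsupp.sum_of_support_subset (s := s) _
        (Finset.subset_biUnion_of_mem (fun k => (v k).support) (Finset.mem_univ k)) _ (by simp),
      ← Finset.sum_coe_sort s]
    refine Finset.sum_congr rfl fun p _ => ?_
    rw [← hL, ← hL, map_smul, one_apply_eq_self]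
  have := TD.sum_inner_mk2_nonneg hρ hφ hσ (fun q : ι × s => c q.1)
    (fun q => v q.1 q.2 • q.2.1.1) fun q => q.2.1.2
  simp only [Fintype.sum_prod_type] at this
  convert this using 2 with k
  rw [Finset.sum_comm]
  refine Finset.sum_congr rfl fun l _ => ?_
  simp only [hv, map_sum, HilbertModule.inner_sum_left, HilbertModule.inner_sum_right]
  exact Finset.sum_comm

lemma sum_inner_nonneg (hρ : IsCPAction hX ρ) (hφ : IsCorrespondenceAction hY φ)
    {σ : A →ₗ[ℂ] Z →L[ℂ] Z} (hσ : ∀ a x y, σ a (TD.mk2 x y) = TD.mk2 (ρ a x) y)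
    {ι : Type*} [Fintype ι] (c : ι → A) (z : ι → Z) :
    0 ≤ ∑ k, ∑ l, TD.str.inner (z k) (σ (star (c k) * c l) (z l)) := by
  have hcont : Continuous fun z : ι → Z =>
      ∑ k, ∑ l, TD.str.inner (z k) (σ (star (c k) * c l) (z l)) := by
    refine continuous_finsetSum _ fun k _ => continuous_finsetSum _ fun l _ => ?_
    have h : Continuous fun z : ι → Z => (z k, σ (star (c k) * c l) (z l)) := by fun_prop
    exact TD.str.continuous_inner.comp h
  have hdense : DenseRange (Pi.map fun _ : ι => TD.amplify 1) :=
    DenseRange.piMap fun _ => TD.denseRange_amplify_one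
  exact hdense.induction_on (p := fun z => 0 ≤ ∑ k, ∑ l,
    TD.str.inner (z k) (σ (star (c k) * c l) (z l))) z
    (CStarAlgebra.isClosed_nonneg.preimage hcont)
    fun v => TD.sum_inner_amplify_nonneg hρ hφ hσ c v

lemma clm_ext {W : Type*} [NormedAddCommGroup W] [NormedSpace ℂ W] {L L' : Z →L[ℂ] W}
    (h : ∀ x y, L (TD.mk2 x y) = L' (TD.mk2 x y)) : L = L' :=
  ContinuousLinearMap.ext_on TD.dense_span (by rintro _ ⟨p, rfl⟩; exact h p.1 p.2)

/-- The map `ρ ⊗ Id` on an interior tensor product. -/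
lemma exists_action_tensor_id (hρ : IsCPAction hX ρ) (hφ : IsCorrespondenceAction hY φ) :
    ∃ σ : A →ₗ[ℂ] Z →L[ℂ] Z, ∀ a x y, σ a (TD.mk2 x y) = TD.mk2 (ρ a x) y := by
  have hex : ∀ a, ∃ L : Z →L[ℂ] Z, ∀ x y, L (TD.mk2 x y) = TD.mk2 (ρ a x) y := fun a => by
    obtain ⟨S, hS⟩ := hρ.adjointable a
    obtain ⟨T', hT'⟩ := hS.exists_clm
    obtain ⟨S', hS'⟩ := hS.symm.exists_clm
    rw [← funext hT', ← funext hS'] at hS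
    obtain ⟨L, hL, -⟩ := TD.exists_clm_tensor_id hφ hS
    exact ⟨L, fun x y => by rw [hL, hT']⟩
  choose σ hσ using hex
  refine ⟨{ toFun := σ, map_add' := fun a a' => ?_, map_smul' := fun c a => ?_ }, hσ⟩
  · refine TD.clm_ext fun x y => ?_
    simp only [add_apply, hσ, hρ.map_add, TD.mk2_add_left]
  · refine TD.clm_ext fun x y => ?_
    obtain ⟨L, hL⟩ := TD.exists_clm_left hφ y
    rw [RingHom.id_apply, smul_apply, hσ, hσ, hρ.map_smul, ← hL, ← hL, map_smul]

/-- If `S` is adjoint to `T`, then `S ⊗ Id` is adjoint to `T ⊗ Id`, and both operators satisfy the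
same norm bound. -/
lemma exists_adjoint_tensor_id (hφ : IsCorrespondenceAction hY φ) {T S : X →L[ℂ] X}
    (h : HilbertModule.IsAdjointPair hX hX T S) {L : Z →L[ℂ] Z}
    (hL : ∀ x y, L (TD.mk2 x y) = TD.mk2 (T x) y) :
    ∃ L' : Z →L[ℂ] Z, HilbertModule.IsAdjointPair TD.str TD.str L L' ∧
      (∀ x y, L' (TD.mk2 x y) = TD.mk2 (S x) y) ∧
      (∀ z, ‖L z‖ ≤ √(‖S‖ * ‖T‖) * ‖z‖) ∧ ∀ z, ‖L' z‖ ≤ √(‖S‖ * ‖T‖) * ‖z‖ := by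
  obtain ⟨L₀, hL₀, hb⟩ := TD.exists_clm_tensor_id hφ h
  obtain ⟨L', hL', hb'⟩ := TD.exists_clm_tensor_id hφ h.symm
  obtain rfl : L₀ = L := TD.clm_ext fun x y => by rw [hL₀, hL]
  exact ⟨L', TD.isAdjointPair_tensor_id h hL hL', hL', hb, by rwa [mul_comm ‖S‖]⟩

/-- `ρ ⊗ Id` is completely positive. -/
lemma isCPAction (hρ : IsCPAction hX ρ) (hφ : IsCorrespondenceAction hY φ)
    {σ : A →ₗ[ℂ] Z →L[ℂ] Z} (hσ : ∀ a x y, σ a (TD.mk2 x y) = TD.mk2 (ρ a x) y) :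
    IsCPAction TD.str fun a => ⇑(σ a) where
  map_add a a' z := by rw [map_add, add_apply]
  map_smul c a z := by rw [map_smul, smul_apply]
  add_right a := map_add (σ a)
  adjointable a := by
    obtain ⟨S, hS⟩ := hρ.adjointable a
    obtain ⟨T', hT'⟩ := hS.exists_clm
    obtain ⟨S', hS'⟩ := hS.symm.exists_clm
    rw [← funext hT', ← funext hS'] at hS
    obtain ⟨L', hL', -⟩ := TD.exists_adjoint_tensor_id hφ hS (L := σ a) fun x y => by rw [hσ, hT']
    exact ⟨L', hL'⟩
  pos n M := by
    rintro ⟨N, rfl⟩ z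
    refine isPositiveElem_iff_nonneg.2 ?_
    have h1 : ∑ i, ∑ j, TD.str.inner (z i) (σ ((N.conjTranspose * N) i j) (z j)) =
        ∑ m, ∑ i, ∑ j, TD.str.inner (z i) (σ (star (N m i) * N m j) (z j)) := by
      simp only [Matrix.mul_apply, Matrix.conjTranspose_apply, map_sum, sum_apply,
        HilbertModule.inner_sum_right]
      rw [Finset.sum_comm (t := Finset.univ) (s := Finset.univ)
        (f := fun m i => ∑ j, TD.str.inner (z i) (σ (star (N m i) * N m j) (z j)))]
      exact Finset.sum_congr rfl fun i _ => Finset.sum_comm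
    rw [h1]
    exact Finset.sum_nonneg fun m _ => TD.sum_inner_nonneg hρ hφ hσ (N m) z

/-- `ρ ⊗ Id` is strict. -/
lemma isStrictAction (hρ : IsStrictAction hX ρ) (hφ : IsCorrespondenceAction hY φ)
    {σ : A →ₗ[ℂ] Z →L[ℂ] Z} (hσ : ∀ a x y, σ a (TD.mk2 x y) = TD.mk2 (ρ a x) y) :
    IsStrictAction TD.str fun a => ⇑(σ a) := by
  obtain ⟨e, he, S, hS, hc⟩ := hρ
  choose T' hT' using fun n => (hS n).exists_clm
  choose S' hS' using fun n => (hS n).symm.exists_clm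
  simp only [← hS', ← hT'] at hc
  have hpair : ∀ n, HilbertModule.IsAdjointPair hX hX (T' n) (S' n) := fun n => by
    rw [funext (hT' n), funext (hS' n)]
    exact hS n
  have hbdd : ∀ {R : ℕ → X →L[ℂ] X}, (∀ x, CauchySeq fun n => R n x) →
      ∃ D, ∀ n, ‖R n‖ ≤ D := fun {R} hR => banach_steinhaus fun x => by
    obtain ⟨D, hD⟩ := (hR x).isBounded_range.exists_norm_le
    exact ⟨D, fun n => hD _ ⟨n, rfl⟩⟩
  obtain ⟨D, hD⟩ := hbdd fun x => (hc x).1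
  obtain ⟨D', hD'⟩ := hbdd fun x => (hc x).2
  choose L' hadj hL' hb hb' using fun n => TD.exists_adjoint_tensor_id hφ (hpair n)
    (L := σ (e n)) fun x y => by rw [hσ, hT']
  have hle : ∀ n (z : Z), √(‖S' n‖ * ‖T' n‖) * ‖z‖ ≤ √(D' * D) * ‖z‖ := fun n z => by
    have h0 := (norm_nonneg _).trans (hD' n)
    gcongr
    exacts [hD' n, hD n]
  choose R hR using TD.exists_clm_left hφ
  refine ⟨e, he, fun n => L' n, hadj, fun z => ⟨?_, ?_⟩⟩
  · refine cauchySeq_apply_of_dense_span TD.dense_span (fun n => σ (e n))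
      (fun n z => (hb n z).trans (hle n z)) (fun p => ?_) z
    simp only [hσ, ← hT']
    simp only [← hR]
    exact (R p.2).uniformContinuous.comp_cauchySeq (hc p.1).1
  · refine cauchySeq_apply_of_dense_span TD.dense_span L'
      (fun n z => (hb' n z).trans (hle n z)) (fun p => ?_) z
    simp only [hL']
    simp only [← hR]
    exact (R p.2).uniformContinuous.comp_cauchySeq (hc p.1).2

end TensorData

namespace KSGNSData

variable {A B X E : Type u} [NonUnitalCStarAlgebra A] [NonUnitalCStarAlgebra B]
  [NormedAddCommGroup X] [NormedSpace ℂ X] [CompleteSpace X]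
  [NormedAddCommGroup E] [NormedSpace ℂ E] [CompleteSpace E]
  {hX : HilbertModule B X} {ρ : A → X → X} (K : KSGNSData hX ρ E)

lemma dense_span : Dense (Submodule.span ℂ (Set.range fun p : A × X => K.t p.1 p.2) : Set E) :=
  Submodule.dense_iff_topologicalClosure_eq_top.2 K.dense

lemma exists_clm_t (a : A) : ∃ L : X →L[ℂ] E, ∀ x, L x = K.t a x := by
  have h : ∀ a', HilbertModule.IsAdjointPair hX hX (ρ (star a * a')) (ρ (star a' * a)) :=
    fun a' x x' => by rw [← hX.star_inner, ← K.inner_t, K.str.star_inner, K.inner_t]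
  refine K.str.exists_clm_of_forall_inner K.dense_span _ fun p =>
    ⟨hX.innerSL (ρ (star a * p.1) p.2), fun x => ?_⟩
  rw [hX.innerSL_apply, h, K.inner_t]

lemma exists_clm_act (a : A) : ∃ L : E →L[ℂ] E, ∀ e, L e = K.act a e :=
  (K.act_adjoint a).exists_clm

end KSGNSData

/-- The interior tensor product of a KSGNS module with a correspondence is unitarily equivalent,
as a correspondence, to the KSGNS module of the map induced on the interior tensor product. -/
lemma TensorData.exists_unitary_ksgns {A B C X Y Z E EY E₂ : Type u}
    [NonUnitalCStarAlgebra A] [NonUnitalCStarAlgebra B] [NonUnitalCStarAlgebra C]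
    [NormedAddCommGroup X] [NormedSpace ℂ X] [CompleteSpace X]
    [NormedAddCommGroup Y] [NormedSpace ℂ Y] [CompleteSpace Y]
    [NormedAddCommGroup Z] [NormedSpace ℂ Z] [CompleteSpace Z]
    [NormedAddCommGroup E] [NormedSpace ℂ E] [CompleteSpace E]
    [NormedAddCommGroup EY] [NormedSpace ℂ EY] [CompleteSpace EY]
    [NormedAddCommGroup E₂] [NormedSpace ℂ E₂] [CompleteSpace E₂]
    {hX : HilbertModule B X} {ρ : A → X → X} {hY : HilbertModule C Y} {φ : B → Y → Y}
    (hφ : IsCorrespondenceAction hY φ) (TD : TensorData hX hY φ Z) {σ : A → Z → Z}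
    (hσ : ∀ a x y, σ a (TD.mk2 x y) = TD.mk2 (ρ a x) y)
    (K : KSGNSData hX ρ E) (TD2 : TensorData K.str hY φ EY) (K₂ : KSGNSData TD.str σ E₂) :
    ∃ U : EY →L[ℂ] E₂, Function.Surjective U ∧
      (∀ v w, K₂.str.inner (U v) (U w) = TD2.str.inner v w) ∧
      (∀ a e y, U (TD2.mk2 (K.act a e) y) = K₂.act a (U (TD2.mk2 e y))) ∧
      ∀ a x y, U (TD2.mk2 (K.t a x) y) = K₂.t a (TD.mk2 x y) := by
  choose L hL using TD2.exists_clm_left hφ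
  have hj : Dense (Submodule.span ℂ (Set.range fun i : A × X × Y =>
      TD2.mk2 (K.t i.1 i.2.1) i.2.2) : Set EY) := by
    refine Dense.of_closure ?_
    rw [← Submodule.topologicalClosure_coe]
    refine TD2.dense_span.mono (Submodule.span_le.2 ?_)
    rintro _ ⟨⟨e, y⟩, rfl⟩
    rw [SetLike.mem_coe]
    dsimp only
    rw [← hL]
    refine (L y).apply_mem_of_dense_span K.dense_span (Submodule.isClosed_topologicalClosure _)
      (fun p => Submodule.le_topologicalClosure _ (Submodule.subset_span ?_)) e
    exact ⟨(p.1, p.2, y), (hL _ _).symm⟩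
  have hk : Dense (Submodule.span ℂ (Set.range fun i : A × X × Y =>
      K₂.t i.1 (TD.mk2 i.2.1 i.2.2)) : Set E₂) := by
    refine Dense.of_closure ?_
    rw [← Submodule.topologicalClosure_coe]
    refine K₂.dense_span.mono (Submodule.span_le.2 ?_)
    rintro _ ⟨⟨a, z⟩, rfl⟩
    obtain ⟨R, hR⟩ := K₂.exists_clm_t a
    rw [SetLike.mem_coe]
    dsimp only
    rw [← hR]
    refine R.apply_mem_of_dense_span TD.dense_span (Submodule.isClosed_topologicalClosure _)
      (fun p => Submodule.le_topologicalClosure _ (Submodule.subset_span ?_)) z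
    exact ⟨(a, p.1, p.2), (hR _).symm⟩
  obtain ⟨U, hsurj, hinner, hU⟩ := TD2.str.exists_unitary_of_inner_eq K₂.str hj hk fun i i' => by
    rw [K₂.inner_t, hσ, TD.inner_mk2, TD2.inner_mk2, K.inner_t]
  have hU' : ∀ a x y, U (TD2.mk2 (K.t a x) y) = K₂.t a (TD.mk2 x y) := fun a x y => hU (a, x, y)
  refine ⟨U, hsurj, hinner, fun a e y => ?_, hU'⟩
  obtain ⟨P, hP⟩ := K.exists_clm_act a
  obtain ⟨Q, hQ⟩ := K₂.exists_clm_act a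
  have : (U.comp (L y)).comp P = Q.comp (U.comp (L y)) := by
    refine ContinuousLinearMap.ext_on K.dense_span ?_
    rintro _ ⟨p, rfl⟩
    simp only [ContinuousLinearMap.comp_apply, hL, hP, hQ, K.act_t, K₂.act_t, hU']
  simpa only [ContinuousLinearMap.comp_apply, hL, hP, hQ] using DFunLike.congr_fun this e
end HilbertModuleLemmas

/-- Let `(ρ, X)` be a strict positive `A`–`B`-correspondence and
`(φ, Y)` a nondegenerate `B`–`C`-correspondence.  Then
`ρ ⊗ Id : A → End_C(X ⊗_B Y)`, `(ρ ⊗ Id)(a)(x ⊗ y) = ρ(a)x ⊗ y`, is a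
well-defined strict completely positive map, and there is an isomorphism of
`A`–`C`-correspondences `(A ⊗_ρ X) ⊗_B Y ≅ A ⊗_{ρ⊗Id} (X ⊗_B Y)` intertwining
the left `A`-actions. -/
theorem ksgns_tensor_compat {A B C X Y XY : Type u}
    [NonUnitalCStarAlgebra A] [NonUnitalCStarAlgebra B] [NonUnitalCStarAlgebra C]
    [NormedAddCommGroup X] [NormedSpace ℂ X] [CompleteSpace X]
    [NormedAddCommGroup Y] [NormedSpace ℂ Y] [CompleteSpace Y]
    [NormedAddCommGroup XY] [NormedSpace ℂ XY] [CompleteSpace XY]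
    (hX : HilbertModule B X) (ρ : A → X → X)
    (hcp : IsCPAction hX ρ) (hstrict : IsStrictAction hX ρ)
    (hY : HilbertModule C Y) (φ : B → Y → Y) (hφ : IsCorrespondenceAction hY φ)
    (hφnd : (Submodule.span ℂ {y : Y | ∃ (b : B) (y' : Y), y = φ b y'}).topologicalClosure = ⊤)
    (TD : TensorData hX hY φ XY) :
    -- `ρ ⊗ Id` is a well-defined strict completely positive map on `X ⊗_B Y`
    (∃ σ : A → XY → XY,
        (∀ (a : A) (x : X) (y : Y), σ a (TD.mk2 x y) = TD.mk2 (ρ a x) y) ∧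
        IsCPAction TD.str σ ∧ IsStrictAction TD.str σ)
    -- and the KSGNS module of `ρ ⊗ Id` is `(A ⊗_ρ X) ⊗_B Y`
    ∧ (∀ σ : A → XY → XY,
        (∀ (a : A) (x : X) (y : Y), σ a (TD.mk2 x y) = TD.mk2 (ρ a x) y) →
        ∀ (E EY E₂ : Type u)
          [NormedAddCommGroup E] [NormedSpace ℂ E] [CompleteSpace E]
          [NormedAddCommGroup EY] [NormedSpace ℂ EY] [CompleteSpace EY]
          [NormedAddCommGroup E₂] [NormedSpace ℂ E₂] [CompleteSpace E₂]
          (K : KSGNSData hX ρ E) (TD2 : TensorData K.str hY φ EY)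
          (K₂ : KSGNSData TD.str σ E₂),
          ∃ U : EY → E₂,
            Function.Surjective U ∧
            (∀ v w : EY, U (v + w) = U v + U w) ∧
            (∀ (c : ℂ) (v : EY), U (c • v) = c • U v) ∧
            (∀ v w : EY, K₂.str.inner (U v) (U w) = TD2.str.inner v w) ∧
            -- `U` intertwines the left `A`-actions
            (∀ (a : A) (e : E) (y : Y),
              U (TD2.mk2 (K.act a e) y) = K₂.act a (U (TD2.mk2 e y))) ∧
            -- `U` sends `(a ⊗ x) ⊗ y` to `a ⊗ (x ⊗ y)`
            (∀ (a : A) (x : X) (y : Y),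
              U (TD2.mk2 (K.t a x) y) = K₂.t a (TD.mk2 x y))) := by
  refine ⟨?_, fun σ hσ E EY E₂ _ _ _ _ _ _ _ _ _ K TD2 K₂ => ?_⟩
  · obtain ⟨σ, hσ⟩ := TD.exists_action_tensor_id hcp hφ
    exact ⟨fun a => σ a, hσ, TD.isCPAction hcp hφ hσ, TD.isStrictAction hstrict hφ hσ⟩
  · obtain ⟨U, hsurj, hinner, hact, ht⟩ := TD.exists_unitary_ksgns hφ hσ K TD2 K₂
    exact ⟨U, hsurj, map_add U, map_smul U, hinner, hact, ht⟩
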